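/- arXiv:2001.03033 — 3 statements merged into one kernel-verified Lean document; each statement's English description precedes it below -/
import Mathlib

section
/- Let q ∈ ℂ with 0 < |q| < 1 and let g : ℂ∖{0} → ℂ be holomorphic. Set g₀ := (1/(2πi))·∮_{|z|=1} g(z)/z dz (the zeroth Laurent coefficient of g). Then there exists a holomorphic function φ : ℂ∖{0} → ℂ satisfying φ(q·z) − φ(z) = g(z) for all z ∈ ℂ∖{0} if and only if g₀ = 0; moreover any two holomorphic solutions φ, φ' of this functional equation differ by an additive constant. -/
open Complex

namespace QDiff
open Metric Set Filter Topology

lemma annulus {f : ℂ → ℂ} {r R : ℝ} (hr : 0 < r) (hle : r ≤ R)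
    (hf : ∀ z : ℂ, r ≤ ‖z‖ → DifferentiableAt ℂ f z) :
    (∮ z in C(0, R), f z) = ∮ z in C(0, r), f z := by
  apply Complex.circleIntegral_eq_of_differentiable_on_annulus_off_countable hr hle
    (s := ∅) countable_empty
  · intro z hz
    refine (hf z ?_).continuousAt.continuousWithinAt
    simpa using hz.2
  · intro z hz
    refine hf z ?_
    have := hz.1.2
    simp at this
    exact this.le

lemma dat {g : ℂ → ℂ} (hg : DifferentiableOn ℂ g {z : ℂ | z ≠ 0}) {z : ℂ} (hz : z ≠ 0) :
    DifferentiableAt ℂ g z :=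
  hg.differentiableAt (isOpen_ne.mem_nhds hz)

lemma ne_of_le {r : ℝ} (hr : 0 < r) {z : ℂ} (h : r ≤ ‖z‖) : z ≠ 0 :=
  norm_pos_iff.1 (hr.trans_le h)

lemma rotate (q : ℂ) (f : ℂ → ℂ) :
    (∮ z in C(0, 1), z⁻¹ * f (q * z)) = I * ∫ θ in (0:ℝ)..(2 * Real.pi), f (circleMap 0 ‖q‖ θ) := by
  have h1 : ∀ θ : ℝ, q * circleMap 0 1 θ = circleMap 0 ‖q‖ (θ + q.arg) := by
    intro θ
    conv_lhs => rw [← Complex.norm_mul_exp_arg_mul_I q]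
    simp only [circleMap, zero_add, ofReal_one, one_mul, ofReal_add, add_mul, Complex.exp_add]
    ring
  have h2 : (∮ z in C(0, 1), z⁻¹ * f (q * z))
      = ∫ θ in (0:ℝ)..(2 * Real.pi), I * f (circleMap 0 ‖q‖ (θ + q.arg)) := by
    rw [circleIntegral]
    apply intervalIntegral.integral_congr
    intro θ _
    have : circleMap 0 1 θ ≠ 0 := circleMap_ne_center one_ne_zero
    simp only [deriv_circleMap, smul_eq_mul, h1]
    field_simp
  rw [h2, intervalIntegral.integral_const_mul,
    intervalIntegral.integral_comp_add_right (fun θ => f (circleMap 0 ‖q‖ θ))]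
  have hp : Function.Periodic (fun θ => f (circleMap 0 ‖q‖ θ)) (2 * Real.pi) := by
    intro θ
    simp only [periodic_circleMap 0 ‖q‖ θ]
  have := hp.intervalIntegral_add_eq q.arg 0
  rw [add_comm (2 * Real.pi), zero_add] at *
  rw [this]

lemma circle_inv (r : ℝ) (hr : 0 < r) (f : ℂ → ℂ) :
    (∮ z in C(0, r), z⁻¹ * f z) = I * ∫ θ in (0:ℝ)..(2 * Real.pi), f (circleMap 0 r θ) := by
  rw [circleIntegral, ← intervalIntegral.integral_const_mul]
  apply intervalIntegral.integral_congr
  intro θ _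
  have : circleMap 0 r θ ≠ 0 := circleMap_ne_center hr.ne'
  simp only [deriv_circleMap, smul_eq_mul]
  field_simp

lemma necessity (q : ℂ) (hq0 : 0 < ‖q‖) (hq1 : ‖q‖ < 1) (g φ : ℂ → ℂ)
    (hφ : DifferentiableOn ℂ φ {z : ℂ | z ≠ 0})
    (h : ∀ z : ℂ, z ≠ 0 → φ (q * z) - φ z = g z) : (∮ z in C(0, 1), g z / z) = 0 := by
  have hq : q ≠ 0 := norm_pos_iff.1 hq0
  have e1 : (∮ z in C(0, 1), g z / z)
      = ∮ z in C(0, 1), (z⁻¹ * φ (q * z) - z⁻¹ * φ z) := by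
    apply circleIntegral.integral_congr zero_le_one
    intro z hz
    have hz0 : z ≠ 0 := ne_of_le one_pos (by simpa using hz.ge)
    simp only [← h z hz0]
    field_simp
  have c1 : CircleIntegrable (fun z => z⁻¹ * φ (q * z)) 0 1 := by
    apply ContinuousOn.circleIntegrable zero_le_one
    intro z hz
    have hz0 : z ≠ 0 := ne_of_le one_pos (by simpa using hz.ge)
    have h2 : DifferentiableAt ℂ φ (q * z) := dat hφ (mul_ne_zero hq hz0)
    have h3 : DifferentiableAt ℂ (fun z => φ (q * z)) z :=
      DifferentiableAt.comp z h2 (differentiableAt_id.const_mul q)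
    exact ((differentiableAt_inv hz0).mul h3).continuousAt.continuousWithinAt
  have c2 : CircleIntegrable (fun z => z⁻¹ * φ z) 0 1 := by
    apply ContinuousOn.circleIntegrable zero_le_one
    intro z hz
    have hz0 : z ≠ 0 := ne_of_le one_pos (by simpa using hz.ge)
    exact ((differentiableAt_inv hz0).mul (dat hφ hz0)).continuousAt.continuousWithinAt
  rw [e1, circleIntegral.integral_sub c1 c2, rotate, ← circle_inv _ hq0,
    annulus hq0 hq1.le, sub_self]
  intro z hz
  have hz0 : z ≠ 0 := ne_of_le hq0 hz
  exact (differentiableAt_inv hz0).mul (dat hφ hz0)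

lemma uniq (q : ℂ) (hq0 : 0 < ‖q‖) (hq1 : ‖q‖ < 1) (ψ : ℂ → ℂ)
    (hψ : DifferentiableOn ℂ ψ {z : ℂ | z ≠ 0})
    (h : ∀ z : ℂ, z ≠ 0 → ψ (q * z) = ψ z) : ∃ c, ∀ z : ℂ, z ≠ 0 → ψ z = c := by
  have hq : q ≠ 0 := norm_pos_iff.1 hq0
  have hz : ∀ n : ℤ, ∀ z : ℂ, z ≠ 0 → ψ (q ^ n * z) = ψ z := by
    intro n
    induction n using Int.induction_on with
    | zero => simp
    | succ n ih =>
      intro z hz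
      rw [zpow_add_one₀ hq, mul_assoc, ih _ (mul_ne_zero hq hz), h z hz]
    | pred n ih =>
      intro z hz
      rw [zpow_sub_one₀ hq, mul_assoc, ih _ (mul_ne_zero (inv_ne_zero hq) hz),
        ← h _ (mul_ne_zero (inv_ne_zero hq) hz), mul_inv_cancel_left₀ hq]
  have hK : IsCompact (closedBall (0:ℂ) 1 \ ball 0 ‖q‖) :=
    (isCompact_closedBall (0:ℂ) 1).diff isOpen_ball
  obtain ⟨C, hC⟩ := hK.exists_bound_of_continuousOn (f := ψ) (by
    refine hψ.continuousOn.mono ?_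
    intro z hz
    exact ne_of_le hq0 (by simpa using hz.2))
  have hb : ∀ z : ℂ, z ≠ 0 → ‖ψ z‖ ≤ C := by
    intro z hz0
    obtain ⟨n, hn1, hn2⟩ := exists_mem_Ico_zpow (norm_pos_iff.2 hz0)
      ((one_lt_inv₀ hq0).2 hq1)
    rw [← hz (n + 1) z hz0]
    apply hC
    have hp : 0 < ‖q‖ ^ n := zpow_pos hq0 n
    rw [inv_zpow] at hn1 hn2
    have hp1 : ‖q‖ ^ (n+1) = ‖q‖ ^ n * ‖q‖ := zpow_add_one₀ hq0.ne' n
    have hp' : 0 < ‖q‖ ^ (n+1) := zpow_pos hq0 _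
    have a1 : 1 ≤ ‖q‖ ^ n * ‖z‖ := by
      have := mul_le_mul_of_nonneg_left hn1 hp.le
      rwa [mul_inv_cancel₀ hp.ne'] at this
    have a2 : ‖q‖ ^ (n+1) * ‖z‖ ≤ 1 := by
      have := mul_le_mul_of_nonneg_left hn2.le hp'.le
      rwa [mul_inv_cancel₀ hp'.ne'] at this
    constructor
    · simpa using a2
    · simp only [mem_ball, dist_zero_right, norm_mul, norm_zpow, not_lt, hp1]
      nlinarith
  have hd : Differentiable ℂ (fun w => ψ (exp w)) := fun w =>
    DifferentiableAt.comp w (dat hψ (exp_ne_zero w)) differentiable_exp.differentiableAt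
  refine ⟨ψ (exp 0), fun z hz0 => ?_⟩
  have := hd.apply_eq_apply_of_bounded (by
    rw [isBounded_iff_forall_norm_le]
    exact ⟨C, by rintro _ ⟨w, rfl⟩; exact hb _ (exp_ne_zero w)⟩) (log z) 0
  simpa only [exp_log hz0] using this

lemma entire (q : ℂ) (hq1 : ‖q‖ < 1) (h : ℂ → ℂ) (hh : Differentiable ℂ h) (h0 : h 0 = 0) :
    ∃ H : ℂ → ℂ, Differentiable ℂ H ∧ ∀ u, H (q * u) - H u = h u := by
  have hds : Differentiable ℂ (dslope h 0) := by
    rw [← differentiableOn_univ, Complex.differentiableOn_dslope univ_mem]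
    exact hh.differentiableOn
  have hb : ∀ R : ℝ, ∃ C : ℝ, ∀ n : ℕ, ∀ u ∈ ball (0:ℂ) R, ‖h (q ^ n * u)‖ ≤ C * ‖q‖ ^ n := by
    intro R
    obtain ⟨C, hC⟩ := (isCompact_closedBall (0:ℂ) R).exists_bound_of_continuousOn
      hds.continuous.continuousOn
    refine ⟨C * R, fun n u hu => ?_⟩
    have hu' : ‖u‖ < R := by simpa using hu
    have e : h (q ^ n * u) = (q ^ n * u) * dslope h 0 (q ^ n * u) := by
      have := sub_smul_dslope h 0 (q ^ n * u)
      rw [h0] at this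
      simpa using this.symm
    have hn : ‖q‖ ^ n ≤ 1 := pow_le_one₀ (norm_nonneg _) hq1.le
    have hle : ‖q‖ ^ n * ‖u‖ ≤ R := by nlinarith [norm_nonneg u]
    have hc := hC (q ^ n * u) (by simpa using hle)
    rw [e, norm_mul, norm_mul, norm_pow]
    have hC0 : 0 ≤ C := (norm_nonneg _).trans hc
    have p : 0 ≤ ‖q‖ ^ n := by positivity
    have hR0 : 0 ≤ R := (norm_nonneg u).trans hu'.le
    calc ‖q‖ ^ n * ‖u‖ * ‖dslope h 0 (q ^ n * u)‖ ≤ ‖q‖ ^ n * R * C := by gcongr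
      _ = _ := by ring
  have hs : ∀ C : ℝ, Summable fun n : ℕ => C * ‖q‖ ^ n := fun C =>
    (summable_geometric_of_lt_one (norm_nonneg _) hq1).mul_left C
  refine ⟨fun u => - ∑' n : ℕ, h (q ^ n * u), ?_, ?_⟩
  · intro u
    obtain ⟨C, hC⟩ := hb (‖u‖ + 1)
    have := differentiableOn_tsum_of_summable_norm (F := fun (n : ℕ) u => h (q ^ n * u)) (hs C)
      (fun n => (hh.comp (differentiable_id.const_mul (q ^ n))).differentiableOn) isOpen_ball hC
    exact (this.differentiableAt (isOpen_ball.mem_nhds (by simp))).neg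
  · intro u
    obtain ⟨C, hC⟩ := hb (‖u‖ + 1)
    have hsum : Summable fun n : ℕ => h (q ^ n * u) :=
      Summable.of_norm_bounded (hs C) fun n => hC n u (by simp)
    have := hsum.tsum_eq_zero_add
    simp only [this, pow_succ, mul_assoc, pow_zero, one_mul]
    ring

/-- Cauchy transform on the circle of radius `R`. -/
noncomputable def G (g : ℂ → ℂ) (R : ℝ) (z : ℂ) : ℂ :=
  (2 * (Real.pi : ℂ) * I)⁻¹ • ∮ w in C(0, R), (w - z)⁻¹ • g w

lemma G_eq {g : ℂ → ℂ} (hg : DifferentiableOn ℂ g {z : ℂ | z ≠ 0}) {z : ℂ} {r R : ℝ}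
    (hr : ‖z‖ < r) (hR : r ≤ R) : G g R z = G g r z := by
  have hr0 : 0 < r := (norm_nonneg z).trans_lt hr
  unfold G
  rw [annulus hr0 hR]
  intro w hw
  have : w - z ≠ 0 := by
    rw [sub_ne_zero]; rintro rfl; linarith
  exact ((differentiableAt_id.sub_const z).inv this).smul (dat hg (ne_of_le hr0 hw))

lemma circ {g : ℂ → ℂ} (hg : DifferentiableOn ℂ g {z : ℂ | z ≠ 0}) {R : ℝ} (hR : 0 < R) :
    ContinuousOn g (sphere 0 R) := by
  refine hg.continuousOn.mono fun z hz => ne_of_le hR (by simpa using hz.ge)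

lemma G_diff {g : ℂ → ℂ} (hg : DifferentiableOn ℂ g {z : ℂ | z ≠ 0}) {R : ℝ} (hR : 0 < R) :
    DifferentiableOn ℂ (G g R) (ball 0 R) := by
  lift R to NNReal using hR.le
  have := (hasFPowerSeriesOn_cauchy_integral ((circ hg hR).circleIntegrable hR.le)
    (by exact_mod_cast hR)).differentiableOn
  rw [Metric.eball_coe] at this
  exact this

lemma split {g : ℂ → ℂ} (hg : DifferentiableOn ℂ g {z : ℂ | z ≠ 0}) {z : ℂ} {r R : ℝ}
    (h0 : 0 < r) (hr : r < ‖z‖) (hR : ‖z‖ < R) : g z = G g R z - G g r z := by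
  have hz : z ≠ 0 := ne_of_le h0 hr.le
  have hR0 : 0 < R := by linarith
  have hds : DifferentiableOn ℂ (dslope g z) {z : ℂ | z ≠ 0} :=
    (Complex.differentiableOn_dslope (isOpen_ne.mem_nhds hz)).2 hg
  have h1 := annulus (f := dslope g z) h0 (hr.trans hR).le
    fun w hw => dat hds (ne_of_le h0 hw)
  have h2 : ∀ ρ : ℝ, 0 < ρ → ρ ≠ ‖z‖ → (∮ w in C(0, ρ), dslope g z w)
      = (∮ w in C(0, ρ), (w - z)⁻¹ • g w) - (∮ w in C(0, ρ), (w - z)⁻¹) * g z := by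
    intro ρ hρ hne
    have hwz : ∀ w ∈ sphere (0:ℂ) ρ, w ≠ z := by
      rintro w hw rfl
      exact hne (by simpa using hw.symm)
    have ci : ContinuousOn (fun w : ℂ => (w - z)⁻¹) (sphere 0 ρ) :=
      (continuousOn_id.sub continuousOn_const).inv₀ fun w hw => sub_ne_zero.2 (hwz w hw)
    have e : (∮ w in C(0, ρ), dslope g z w)
        = ∮ w in C(0, ρ), ((w - z)⁻¹ • g w - (w - z)⁻¹ • g z) := by
      apply circleIntegral.integral_congr hρ.le
      intro w hw
      simp only [dslope_of_ne _ (hwz w hw), slope_def_module, smul_sub]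
    have i1 : CircleIntegrable (fun w => (w - z)⁻¹ • g w) 0 ρ :=
      (ci.smul (circ hg hρ)).circleIntegrable hρ.le
    have i2 : CircleIntegrable (fun w => (w - z)⁻¹ • g z) 0 ρ :=
      (ci.smul continuousOn_const).circleIntegrable hρ.le
    rw [e, circleIntegral.integral_sub i1 i2, circleIntegral.integral_smul_const,
      smul_eq_mul]
  have h3 : (∮ w in C(0, r), (w - z)⁻¹) = 0 := by
    apply DiffContOnCl.circleIntegral_eq_zero h0.le
    apply DifferentiableOn.diffContOnCl
    intro w hw
    have hw : ‖w‖ ≤ r := by simpa using closure_ball_subset_closedBall hw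
    have : w - z ≠ 0 := by
      rw [sub_ne_zero]; rintro rfl; linarith
    exact ((differentiableAt_id.sub_const z).inv this).differentiableWithinAt
  rw [h2 R hR0 hR.ne', h2 r h0 hr.ne, h3,
    circleIntegral.integral_sub_inv_of_mem_ball (by simpa using hR)] at h1
  have hpi : (2 * (Real.pi : ℂ) * I) ≠ 0 := two_pi_I_ne_zero
  unfold G
  rw [← smul_sub, smul_eq_mul, eq_inv_mul_iff_mul_eq₀ hpi]
  linear_combination -h1

lemma decomp {g : ℂ → ℂ} (hg : DifferentiableOn ℂ g {z : ℂ | z ≠ 0})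
    (h0 : (∮ z in C(0, 1), g z / z) = 0) :
    ∃ a b : ℂ → ℂ, Differentiable ℂ a ∧ Differentiable ℂ b ∧ a 0 = 0 ∧ b 0 = 0 ∧
      ∀ z, z ≠ 0 → g z = a z + b z⁻¹ := by
  set a : ℂ → ℂ := fun z => G g (‖z‖ + 1) z with ha
  have haR : ∀ R : ℝ, ∀ z : ℂ, ‖z‖ < R → a z = G g R z := by
    intro R z hz
    simp only [ha]
    rcases le_total R (‖z‖ + 1) with h | h
    · exact G_eq hg hz h
    · exact (G_eq hg (by linarith) h).symm
  have had : Differentiable ℂ a := by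
    intro z
    have hR : 0 < ‖z‖ + 1 := by positivity
    have hm : ball (0:ℂ) (‖z‖ + 1) ∈ 𝓝 z := isOpen_ball.mem_nhds (by simp)
    refine ((G_diff hg hR).differentiableAt hm).congr_of_eventuallyEq ?_
    filter_upwards [hm] with w hw
    exact haR _ _ (by simpa using hw)
  have ha0 : a 0 = 0 := by
    rw [haR 1 0 (by simp)]
    unfold G
    have : (∮ w in C(0, 1), (w - 0)⁻¹ • g w) = ∮ z in C(0, 1), g z / z := by
      congr 1; ext w; simp [div_eq_mul_inv, mul_comm]
    rw [this, h0, smul_zero]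
  have hbound : ∃ M : ℝ, ∀ z : ℂ, 1 < ‖z‖ → ‖g z - a z‖ ≤ M / (‖z‖ - 1) := by
    obtain ⟨M, hM⟩ := (isCompact_sphere (0:ℂ) 1).exists_bound_of_continuousOn (circ hg one_pos)
    refine ⟨M, fun z hz => ?_⟩
    have e : g z - a z = - G g 1 z := by
      rw [split hg one_pos hz (lt_add_one ‖z‖)]
      simp [ha]
    rw [e, norm_neg]
    have := circleIntegral.norm_two_pi_i_inv_smul_integral_le_of_norm_le_const
      (f := fun w => (w - z)⁻¹ • g w) (c := 0) (R := 1) (C := M / (‖z‖ - 1)) zero_le_one (by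
        intro w hw
        have hw1 : ‖w‖ = 1 := by simpa using hw
        have h1 : ‖z‖ - 1 ≤ ‖w - z‖ := by
          rw [norm_sub_rev, ← hw1]; exact norm_sub_norm_le z w
        have hp : 0 < ‖z‖ - 1 := by linarith
        have hm := hM w hw
        have : 0 ≤ M := (norm_nonneg _).trans hm
        rw [norm_smul, norm_inv, div_eq_inv_mul]
        gcongr)
    simpa only [one_mul, G] using this
  obtain ⟨M, hM⟩ := hbound
  set b : ℂ → ℂ := Function.update (fun u => g u⁻¹ - a u⁻¹) 0 0 with hb
  have hbne : ∀ u, u ≠ 0 → b u = g u⁻¹ - a u⁻¹ := fun u hu => by simp [hb, hu]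
  have hb0 : b 0 = 0 := by simp [hb]
  refine ⟨a, b, had, ?_, ha0, hb0, ?_⟩
  · rw [← differentiableOn_univ,
      ← Complex.differentiableOn_compl_singleton_and_continuousAt_iff (c := 0) univ_mem]
    constructor
    · rintro u ⟨-, hu⟩
      have hu : u ≠ 0 := hu
      have hd : DifferentiableAt ℂ (fun u => g u⁻¹ - a u⁻¹) u :=
        (DifferentiableAt.comp u (dat hg (inv_ne_zero hu)) (differentiableAt_inv hu)).sub
          (DifferentiableAt.comp (g := a) u (had _) (differentiableAt_inv hu))
      refine (hd.congr_of_eventuallyEq ?_).differentiableWithinAt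
      filter_upwards [isOpen_ne.mem_nhds hu] with v hv
      exact hbne v hv
    · rw [hb, continuousAt_update_same]
      have ht : Tendsto (fun u : ℂ => M / (‖u⁻¹‖ - 1)) (𝓝[≠] 0) (𝓝 0) := by
        have h1 : Tendsto (fun u : ℂ => ‖u⁻¹‖ - 1) (𝓝[≠] 0) atTop :=
          tendsto_atTop_add_const_right _ (-1) 
            (tendsto_norm_cobounded_atTop.comp tendsto_inv₀_nhdsNE_zero)
        exact h1.const_div_atTop M
      refine squeeze_zero_norm' ?_ ht
      have : ball (0:ℂ) 1 ∈ 𝓝[≠] (0:ℂ) := mem_nhdsWithin_of_mem_nhds (ball_mem_nhds _ one_pos)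
      filter_upwards [this, self_mem_nhdsWithin] with u hu hu0
      apply hM
      rw [norm_inv]
      exact (one_lt_inv₀ (norm_pos_iff.2 hu0)).2 (by simpa using hu)
  · intro z hz
    rw [hbne _ (inv_ne_zero hz), inv_inv]
    ring

end QDiff

/-- existence of a holomorphic solution of the functional equation
`φ(q·z) − φ(z) = g(z)` on the punctured plane iff the zeroth Laurent coefficient
`g₀ = (1/(2πi))·∮_{|z|=1} g(z)/z dz` vanishes; uniqueness up to an additive constant. -/
theorem statement0 (q : ℂ) (hq0 : 0 < ‖q‖) (hq1 : ‖q‖ < 1)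
    (g : ℂ → ℂ) (hg : DifferentiableOn ℂ g {z : ℂ | z ≠ 0}) :
    ((∃ φ : ℂ → ℂ, DifferentiableOn ℂ φ {z : ℂ | z ≠ 0} ∧
        ∀ z : ℂ, z ≠ 0 → φ (q * z) - φ z = g z) ↔
      (1 / (2 * (Real.pi : ℂ) * Complex.I)) * (∮ z in C(0, 1), g z / z) = 0) ∧
    ∀ φ φ' : ℂ → ℂ,
      DifferentiableOn ℂ φ {z : ℂ | z ≠ 0} →
      (∀ z : ℂ, z ≠ 0 → φ (q * z) - φ z = g z) →
      DifferentiableOn ℂ φ' {z : ℂ | z ≠ 0} →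
      (∀ z : ℂ, z ≠ 0 → φ' (q * z) - φ' z = g z) →
      ∃ c : ℂ, ∀ z : ℂ, z ≠ 0 → φ' z = φ z + c := by
  have hq : q ≠ 0 := norm_pos_iff.1 hq0
  refine ⟨⟨?_, ?_⟩, ?_⟩
  · rintro ⟨φ, hφ, h⟩
    rw [QDiff.necessity q hq0 hq1 g φ hφ h, mul_zero]
  · intro h
    have h0 : (∮ z in C(0, 1), g z / z) = 0 := by
      rcases mul_eq_zero.1 h with h | h
      · exact absurd h (one_div_ne_zero two_pi_I_ne_zero)
      · exact h
    obtain ⟨a, b, had, hbd, ha0, hb0, hab⟩ := QDiff.decomp hg h0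
    obtain ⟨A, hA, hA'⟩ := QDiff.entire q hq1 a had ha0
    obtain ⟨B, hB, hB'⟩ := QDiff.entire q hq1 b hbd hb0
    refine ⟨fun z => A z - B (q * z⁻¹), ?_, ?_⟩
    · intro z hz
      have h1 : DifferentiableAt ℂ (fun z : ℂ => q * z⁻¹) z :=
        (differentiableAt_inv hz).const_mul q
      exact ((hA z).sub (DifferentiableAt.comp z (hB _) h1)).differentiableWithinAt
    · intro z hz
      have e : q * (q * z)⁻¹ = z⁻¹ := by field_simp
      simp only [e]
      rw [hab z hz, ← hA' z, ← hB' z⁻¹]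
      ring
  · intro φ φ' hφ h hφ' h'
    obtain ⟨c, hc⟩ := QDiff.uniq q hq0 hq1 (fun z => φ' z - φ z) (hφ'.sub hφ) (by
      intro z hz
      linear_combination h' z hz - h z hz)
    exact ⟨c, fun z hz => by linear_combination hc z hz⟩
end

section
/- Let q ∈ ℂ with 0 < |q| < 1 and let g : ℂ∖{0} → ℂ be holomorphic. Set g₀ := (1/(2πi))·∮_{|z|=1} g(z)/z dz and a := exp(g₀). Then there exists a holomorphic nowhere-vanishing function φ : ℂ∖{0} → ℂ∖{0} such that φ(q·z)/φ(z) = exp(g(z))/a for all z ∈ ℂ∖{0}; moreover any two such solutions differ by a nonzero multiplicative constant. -/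
open Complex

/-- solve `v(w) - v(qw) = f(w)` for entire `f` vanishing at the origin -/
lemma entire_qdiff (q : ℂ) (hq1 : ‖q‖ < 1) (f : ℂ → ℂ) (hf : Differentiable ℂ f)
    (hf0 : f 0 = 0) : ∃ v : ℂ → ℂ, Differentiable ℂ v ∧ ∀ w, v w - v (q * w) = f w := by
  have hk : Differentiable ℂ (dslope f 0) := by
    rw [← differentiableOn_univ]
    exact (Complex.differentiableOn_dslope Filter.univ_mem).2 hf.differentiableOn
  have hfk : ∀ w, f w = w * dslope f 0 w := by
    intro w
    have := sub_smul_dslope f 0 w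
    simp [hf0] at this
    exact this.symm
  have hb : ∀ R : ℝ, ∃ M : ℝ, ∀ n : ℕ, ∀ w ∈ Metric.ball (0 : ℂ) R,
      ‖f (q ^ n * w)‖ ≤ ‖q‖ ^ n * M := by
    intro R
    obtain ⟨M, hM⟩ := (isCompact_closedBall (0 : ℂ) R).exists_bound_of_continuousOn
      hk.continuous.continuousOn
    refine ⟨R * M, fun n w hw => ?_⟩
    have hw' : ‖w‖ < R := by simpa using hw
    have hn : ‖q‖ ^ n ≤ 1 := pow_le_one₀ (norm_nonneg _) hq1.le
    have h1 : ‖q ^ n * w‖ ≤ R := by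
      rw [norm_mul, norm_pow]
      nlinarith [norm_nonneg w]
    have h2 := hM (q ^ n * w) (by simpa using h1)
    rw [hfk, norm_mul, norm_mul, norm_pow, mul_assoc]
    gcongr
    exact (norm_nonneg w).trans hw'.le
  have hs : ∀ M : ℝ, Summable fun n : ℕ => ‖q‖ ^ n * M := fun M =>
    (summable_geometric_of_lt_one (norm_nonneg _) hq1).mul_right M
  refine ⟨fun w => ∑' n : ℕ, f (q ^ n * w), ?_, ?_⟩
  · intro w
    obtain ⟨M, hM⟩ := hb (‖w‖ + 1)
    have := Complex.differentiableOn_tsum_of_summable_norm (F := fun (n : ℕ) w => f (q ^ n * w))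
      (hs M) (fun n => (hf.comp (by fun_prop : Differentiable ℂ fun w => q ^ n * w)).differentiableOn)
      Metric.isOpen_ball hM
    exact this.differentiableAt (Metric.isOpen_ball.mem_nhds (by simp))
  · intro w
    obtain ⟨M, hM⟩ := hb (‖w‖ + 1)
    have hsum : Summable fun n : ℕ => f (q ^ n * w) :=
      Summable.of_norm_bounded (hs M) (fun n => hM n w (by simp))
    simp only
    rw [hsum.tsum_eq_zero_add]
    simp [pow_succ, mul_assoc]

lemma cauchy_indep (g : ℂ → ℂ) (hg : DifferentiableOn ℂ g {z : ℂ | z ≠ 0}) (w : ℂ) (r R : ℝ)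
    (hr : 0 < r) (hrR : r ≤ R) (hw : ‖w‖ < r) :
    (∮ z in C(0, R), (z - w)⁻¹ • g z) = ∮ z in C(0, r), (z - w)⁻¹ • g z := by
  have hd : ∀ z : ℂ, r ≤ ‖z‖ → DifferentiableAt ℂ (fun z => (z - w)⁻¹ • g z) z := by
    intro z hz
    have h0 : z ≠ 0 := by rintro rfl; simp at hz; linarith
    have h1 : z - w ≠ 0 := by
      intro h
      rw [sub_eq_zero.1 h] at hz; linarith
    have h2 : DifferentiableAt ℂ g z := hg.differentiableAt (isOpen_ne.mem_nhds h0)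
    exact ((differentiableAt_id.sub_const w).inv h1).smul h2
  refine Complex.circleIntegral_eq_of_differentiable_on_annulus_off_countable hr hrR
    Set.countable_empty ?_ ?_
  · intro z hz
    exact (hd z (by simpa using hz.2)).continuousAt.continuousWithinAt
  · intro z hz
    have : r < ‖z‖ := by simpa using hz.1.2
    exact hd z this.le

lemma cauchy_annulus (g : ℂ → ℂ) (hg : DifferentiableOn ℂ g {z : ℂ | z ≠ 0}) (w : ℂ) (r R : ℝ)
    (hr : 0 < r) (hw : r < ‖w‖) (hR : ‖w‖ < R) :
    (∮ z in C(0, R), (z - w)⁻¹ • g z) - 2 * Real.pi * I * g w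
      = ∮ z in C(0, r), (z - w)⁻¹ • g z := by
  have hw0 : w ≠ 0 := by rintro rfl; simp at hw; linarith
  have hop : IsOpen {z : ℂ | z ≠ 0} := isOpen_ne
  have hk : DifferentiableOn ℂ (dslope g w) {z : ℂ | z ≠ 0} :=
    (Complex.differentiableOn_dslope (hop.mem_nhds hw0)).2 hg
  have key : (∮ z in C(0, R), dslope g w z) = ∮ z in C(0, r), dslope g w z := by
    refine Complex.circleIntegral_eq_of_differentiable_on_annulus_off_countable hr
      (hw.trans hR).le Set.countable_empty ?_ ?_
    · refine hk.continuousOn.mono ?_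
      rintro z hz rfl
      simp at hz; linarith
    · intro z hz
      refine hk.differentiableAt (hop.mem_nhds ?_)
      rintro rfl
      simp at hz; linarith
  have split : ∀ ρ : ℝ, 0 < ρ → ρ ≠ ‖w‖ → (∮ z in C(0, ρ), dslope g w z) =
      (∮ z in C(0, ρ), (z - w)⁻¹ • g z) - (∮ z in C(0, ρ), (z - w)⁻¹) * g w := by
    intro ρ hρ hne
    have hzw : ∀ z ∈ Metric.sphere (0 : ℂ) ρ, z - w ≠ 0 := by
      intro z hz h
      rw [sub_eq_zero.1 h] at hz
      exact hne (by simpa using hz.symm)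
    have hz0 : Metric.sphere (0 : ℂ) ρ ⊆ {z : ℂ | z ≠ 0} := by
      rintro z hz rfl
      simp at hz; linarith
    have c1 : ContinuousOn (fun z : ℂ => (z - w)⁻¹) (Metric.sphere 0 ρ) :=
      ContinuousOn.inv₀ (by fun_prop) hzw
    have c2 : ContinuousOn (fun z : ℂ => (z - w)⁻¹ • g z) (Metric.sphere 0 ρ) :=
      c1.smul (hg.continuousOn.mono hz0)
    have c3 : ContinuousOn (fun z : ℂ => (z - w)⁻¹ * g w) (Metric.sphere 0 ρ) :=
      c1.mul continuousOn_const
    have e : (∮ z in C(0, ρ), (z - w)⁻¹) * g w = ∮ z in C(0, ρ), (z - w)⁻¹ * g w := by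
      have := circleIntegral.integral_smul_const (fun z : ℂ => (z - w)⁻¹) (g w) 0 ρ
      simpa [smul_eq_mul] using this.symm
    rw [e, ← circleIntegral.integral_sub (c2.circleIntegrable hρ.le) (c3.circleIntegrable hρ.le)]
    refine circleIntegral.integral_congr hρ.le fun z hz => ?_
    have : z ≠ w := sub_ne_zero.1 (hzw z hz)
    simp only [dslope_of_ne _ this, slope_def_field, smul_eq_mul]
    field_simp
  rw [split R (by linarith [norm_nonneg w]) hR.ne', split r hr hw.ne,
    circleIntegral.integral_sub_inv_of_mem_ball (by simpa using hR)] at key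
  have z0 : (∮ z in C(0, r), (z - w)⁻¹) = 0 := by
    have hd : ∀ z : ℂ, ‖z‖ ≤ r → DifferentiableAt ℂ (fun z => (z - w)⁻¹) z := by
      intro z hz
      refine (differentiableAt_id.sub_const w).inv ?_
      intro h
      simp only [id] at h
      rw [sub_eq_zero.1 h] at hz; linarith
    refine Complex.circleIntegral_eq_zero_of_differentiable_on_off_countable hr.le
      Set.countable_empty ?_ ?_
    · intro z hz
      exact (hd z (by simpa using hz)).continuousAt.continuousWithinAt
    · intro z hz
      have : ‖z‖ < r := by simpa using hz.1
      exact hd z this.le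
  rw [z0, zero_mul, sub_zero] at key
  exact key

lemma laurent_split (g : ℂ → ℂ) (hg : DifferentiableOn ℂ g {z : ℂ | z ≠ 0}) :
    ∃ f h : ℂ → ℂ, Differentiable ℂ f ∧ Differentiable ℂ h ∧ h 0 = 0 ∧
      f 0 = (1 / (2 * (Real.pi : ℂ) * Complex.I)) * (∮ z in C(0, 1), g z / z) ∧
      ∀ z, z ≠ 0 → g z = f z + h z⁻¹ := by
  have hop : IsOpen {z : ℂ | z ≠ 0} := isOpen_ne
  have hpi : (2 * (Real.pi : ℂ) * I) ≠ 0 := Complex.two_pi_I_ne_zero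
  set f : ℂ → ℂ := fun w => (2 * (Real.pi : ℂ) * I)⁻¹ • ∮ z in C(0, ‖w‖ + 1), (z - w)⁻¹ • g z
    with hfdef
  have hfR : ∀ R : ℝ, ∀ w : ℂ, ‖w‖ < R →
      f w = (2 * (Real.pi : ℂ) * I)⁻¹ • ∮ z in C(0, R), (z - w)⁻¹ • g z := by
    intro R w hw
    have hw0 := norm_nonneg w
    simp only [hfdef]
    rcases le_total R (‖w‖ + 1) with h | h
    · rw [cauchy_indep g hg w R (‖w‖ + 1) (by linarith) h hw]
    · rw [cauchy_indep g hg w (‖w‖ + 1) R (by linarith) h (by linarith)]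
  have hf : Differentiable ℂ f := by
    intro w
    set R : NNReal := ‖w‖₊ + 1 with hR
    have hR0 : 0 < R := by positivity
    have hwR : ‖w‖ < R := by simp [hR]
    have hci : CircleIntegrable g 0 R := by
      refine (hg.continuousOn.mono ?_).circleIntegrable R.2
      rintro z hz rfl
      simp at hz
      exact hR0.ne (by exact_mod_cast hz)
    have hps := (hasFPowerSeriesOn_cauchy_integral hci hR0).differentiableOn
    have hps' := hps.differentiableAt (x := w) (Metric.isOpen_eball.mem_nhds (by
      rw [Metric.mem_eball, edist_zero_right, enorm_eq_nnnorm]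
      exact_mod_cast hwR))
    refine hps'.congr_of_eventuallyEq ?_
    filter_upwards [Metric.isOpen_ball.mem_nhds (show w ∈ Metric.ball (0 : ℂ) R by simpa using hwR)]
      with z hz
    exact hfR R z (by simpa using hz)
  obtain ⟨C, hC⟩ := (isCompact_sphere (0 : ℂ) 1).exists_bound_of_continuousOn
    (hg.continuousOn.mono (by rintro z hz rfl; simp at hz))
  have hC0 : 0 ≤ C := (norm_nonneg _).trans (hC 1 (by simp))
  have hbd : ∀ w : ℂ, 1 < ‖w‖ → ‖g w - f w‖ ≤ (‖w‖ - 1)⁻¹ * C := by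
    intro w hw
    have h := cauchy_annulus g hg w 1 (‖w‖ + 1) one_pos hw (by linarith)
    have e : f w - g w = (2 * (Real.pi : ℂ) * I)⁻¹ • ∮ z in C(0, 1), (z - w)⁻¹ • g z := by
      rw [← h]
      simp only [hfdef, smul_eq_mul]
      field_simp
    rw [norm_sub_rev, e]
    refine (circleIntegral.norm_two_pi_i_inv_smul_integral_le_of_norm_le_const (C := (‖w‖ - 1)⁻¹ * C)
      zero_le_one ?_).trans (by simp)
    intro z hz
    have hz1 : ‖z‖ = 1 := by simpa using hz
    have : ‖w‖ - 1 ≤ ‖z - w‖ := by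
      have := norm_sub_norm_le w z
      rw [norm_sub_rev, hz1] at this; exact this
    rw [norm_smul, norm_inv]
    have := hC z hz
    gcongr
  set h : ℂ → ℂ := fun w => if w = 0 then 0 else g w⁻¹ - f w⁻¹ with hdef
  have hh0 : h 0 = 0 := by simp [hdef]
  have hhd : Differentiable ℂ h := by
    rw [← differentiableOn_univ,
      ← Complex.differentiableOn_compl_singleton_and_continuousAt_iff (c := 0) Filter.univ_mem]
    constructor
    · have : DifferentiableOn ℂ (fun w => g w⁻¹ - f w⁻¹) (Set.univ \ {0}) := by
        intro w hw
        have hw0 : w ≠ 0 := by simpa using hw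
        have h1 : DifferentiableAt ℂ (fun w : ℂ => w⁻¹) w := differentiableAt_inv hw0
        have h2 : DifferentiableAt ℂ g w⁻¹ :=
          hg.differentiableAt (hop.mem_nhds (inv_ne_zero hw0))
        exact ((h2.comp w h1).sub ((hf _).comp w h1)).differentiableWithinAt
      refine this.congr fun w hw => ?_
      have hw0 : w ≠ 0 := by simpa using hw
      simp [hdef, hw0]
    · rw [ContinuousAt, hh0]
      refine squeeze_zero_norm' (a := fun w : ℂ => 2 * C * ‖w‖) ?_ ?_
      · filter_upwards [Metric.ball_mem_nhds (0 : ℂ) (show (0 : ℝ) < 1 / 2 by norm_num)] with w hw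
        by_cases hw0 : w = 0
        · simp [hdef, hw0]
        have hn : ‖w‖ < 1 / 2 := by simpa using hw
        have hp : 0 < ‖w‖ := norm_pos_iff.2 hw0
        have h2 : 2 < ‖w‖⁻¹ := by
          rw [lt_inv_comm₀ (by norm_num) hp]; linarith
        have := hbd w⁻¹ (by rw [norm_inv]; linarith)
        simp only [hdef, hw0, if_false]
        refine this.trans ?_
        rw [norm_inv]
        have : (‖w‖⁻¹ - 1)⁻¹ ≤ 2 * ‖w‖ := by
          rw [inv_le_comm₀ (by linarith) (by positivity), mul_inv]
          linarith
        nlinarith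
      · have : Continuous fun w : ℂ => 2 * C * ‖w‖ := by fun_prop
        simpa using this.tendsto 0
  refine ⟨f, h, hf, hhd, hh0, ?_, ?_⟩
  · simp only [hfdef]
    simp [div_eq_inv_mul]
  · intro z hz
    simp [hdef, hz]

lemma qinv_const (q : ℂ) (hq0 : 0 < ‖q‖) (hq1 : ‖q‖ < 1) (p : ℂ → ℂ)
    (hp : DifferentiableOn ℂ p {z : ℂ | z ≠ 0}) (hinv : ∀ z, z ≠ 0 → p (q * z) = p z) :
    ∀ z, z ≠ 0 → p z = p 1 := by
  have hop : IsOpen {z : ℂ | z ≠ 0} := isOpen_ne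
  have hq : q ≠ 0 := norm_pos_iff.1 hq0
  have hz : ∀ n : ℤ, ∀ z, z ≠ 0 → p (q ^ n * z) = p z := by
    intro n
    induction n with
    | zero => simp
    | succ n ih =>
      intro z hz
      rw [← ih z hz, ← hinv (q ^ (n : ℤ) * z) (mul_ne_zero (zpow_ne_zero _ hq) hz),
        zpow_add_one₀ hq]
      congr 1; ring
    | pred n ih =>
      intro z hz
      rw [← ih z hz, ← hinv (q ^ (-(n : ℤ) - 1) * z) (mul_ne_zero (zpow_ne_zero _ hq) hz),
        zpow_sub_one₀ hq]
      congr 1; field_simp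
  obtain ⟨C, hC⟩ := ((isCompact_closedBall (0 : ℂ) ‖q‖⁻¹).diff
    (Metric.isOpen_ball (x := (0 : ℂ)) (ε := 1))).exists_bound_of_continuousOn
    (hp.continuousOn.mono (by rintro z hz rfl; simp at hz))
  have hbd : ∀ z, z ≠ 0 → ‖p z‖ ≤ C := by
    intro z hz0
    obtain ⟨n, h1, h2⟩ := exists_mem_Ico_zpow (norm_pos_iff.2 hz0) ((one_lt_inv₀ hq0).2 hq1)
    rw [← hz n z hz0]
    have hpos : 0 < ‖q‖ ^ n := zpow_pos hq0 n
    refine hC _ ⟨?_, ?_⟩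
    · rw [mem_closedBall_zero_iff, norm_mul, norm_zpow]
      rw [inv_zpow, zpow_add_one₀ hq0.ne', mul_inv] at h2
      have := mul_lt_mul_of_pos_left h2 hpos
      rw [mul_inv_cancel_left₀ hpos.ne'] at this
      exact this.le
    · rw [mem_ball_zero_iff, norm_mul, norm_zpow, not_lt]
      rw [inv_zpow] at h1
      have := mul_le_mul_of_nonneg_left h1 hpos.le
      rwa [mul_inv_cancel₀ hpos.ne'] at this
  have hd : Differentiable ℂ fun t => p (Complex.exp t) := fun t =>
    (hp.differentiableAt (hop.mem_nhds (Complex.exp_ne_zero t))).comp t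
      Complex.differentiable_exp.differentiableAt
  have hb : Bornology.IsBounded (Set.range fun t => p (Complex.exp t)) := by
    refine (Metric.isBounded_closedBall (x := (0 : ℂ)) (r := C)).subset ?_
    rintro _ ⟨t, rfl⟩
    simpa using hbd _ (Complex.exp_ne_zero t)
  intro z hz0
  have := hd.apply_eq_apply_of_bounded hb (Complex.log z) 0
  simpa [Complex.exp_log hz0] using this

/-- there is a holomorphic nowhere-vanishing `φ` on the punctured plane with
`φ(q·z)/φ(z) = exp(g(z))/a` where `a = exp(g₀)`, `g₀` the zeroth Laurent coefficient of `g`;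
uniqueness up to a nonzero multiplicative constant. -/
theorem statement1 (q : ℂ) (hq0 : 0 < ‖q‖) (hq1 : ‖q‖ < 1)
    (g : ℂ → ℂ) (hg : DifferentiableOn ℂ g {z : ℂ | z ≠ 0}) :
    (∃ φ : ℂ → ℂ, DifferentiableOn ℂ φ {z : ℂ | z ≠ 0} ∧
        (∀ z : ℂ, z ≠ 0 → φ z ≠ 0) ∧
        ∀ z : ℂ, z ≠ 0 →
          φ (q * z) / φ z =
            Complex.exp (g z) /
              Complex.exp ((1 / (2 * (Real.pi : ℂ) * Complex.I)) * (∮ z in C(0, 1), g z / z))) ∧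
    ∀ φ φ' : ℂ → ℂ,
      DifferentiableOn ℂ φ {z : ℂ | z ≠ 0} →
      (∀ z : ℂ, z ≠ 0 → φ z ≠ 0) →
      (∀ z : ℂ, z ≠ 0 →
        φ (q * z) / φ z =
          Complex.exp (g z) /
            Complex.exp ((1 / (2 * (Real.pi : ℂ) * Complex.I)) * (∮ z in C(0, 1), g z / z))) →
      DifferentiableOn ℂ φ' {z : ℂ | z ≠ 0} →
      (∀ z : ℂ, z ≠ 0 → φ' z ≠ 0) →
      (∀ z : ℂ, z ≠ 0 →
        φ' (q * z) / φ' z =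
          Complex.exp (g z) /
            Complex.exp ((1 / (2 * (Real.pi : ℂ) * Complex.I)) * (∮ z in C(0, 1), g z / z))) →
      ∃ c : ℂ, c ≠ 0 ∧ ∀ z : ℂ, z ≠ 0 → φ' z = c * φ z := by
  have hq : q ≠ 0 := norm_pos_iff.1 hq0
  constructor
  · obtain ⟨f, h, hf, hh, hh0, hf0, hgfh⟩ := laurent_split g hg
    obtain ⟨v, hv, hve⟩ := entire_qdiff q hq1 (fun z => f z - f 0) (hf.sub_const _) (by simp)
    obtain ⟨u, hu, hue⟩ := entire_qdiff q hq1 h hh hh0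
    refine ⟨fun z => Complex.exp (u (q * z⁻¹) - v z), ?_, fun z _ => Complex.exp_ne_zero _, ?_⟩
    · intro z hz
      have h1 : DifferentiableAt ℂ (fun z : ℂ => q * z⁻¹) z :=
        (differentiableAt_inv hz).const_mul q
      exact (((hu _).comp z h1).sub (hv z)).cexp.differentiableWithinAt
    · intro z hz
      rw [← hf0]
      simp only
      rw [← Complex.exp_sub, ← Complex.exp_sub, hgfh z hz]
      congr 1
      have e1 := hve z
      have e2 := hue z⁻¹
      have e3 : q * (q * z)⁻¹ = z⁻¹ := by field_simp
      rw [e3]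
      linear_combination e1 + e2
  · intro φ φ' hφ hφ0 hφe hφ' hφ0' hφe'
    have hc := qinv_const q hq0 hq1 (fun z => φ' z / φ z) (hφ'.div hφ hφ0) (by
      intro z hz
      have e := (hφe' z hz).trans (hφe z hz).symm
      have a1 := hφ0 z hz
      have a2 := hφ0 (q * z) (mul_ne_zero hq hz)
      have a3 := hφ0' z hz
      rw [div_eq_div_iff a3 a1] at e
      rw [div_eq_div_iff a2 a1]
      linear_combination e)
    refine ⟨φ' 1 / φ 1, div_ne_zero (hφ0' 1 one_ne_zero) (hφ0 1 one_ne_zero), fun z hz => ?_⟩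
    rw [← hc z hz, div_mul_cancel₀ _ (hφ0 z hz)]
end

section
/- Let A < B be real numbers and m ≥ 3 an integer. Let Δ be holomorphic on the closed strip Σ_{A,B} = {ζ ∈ ℂ : A ≤ Re ζ ≤ B} with ‖Δ‖_m := sup_{ζ∈Σ_{A,B}} |Δ(ζ)|·|ζ|^m < ∞. Then for every ζ with A < Re ζ < B one has the Cauchy splitting Δ(ζ) = (1/(2π))·∫_ℝ Δ(B+is)/((B+is)−ζ) ds − (1/(2π))·∫_ℝ Δ(A+is)/((A+is)−ζ) ds, where both improper integrals converge absolutely. -/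
open Complex MeasureTheory

section
open Filter Topology Set

lemma aux_line_ne (c : ℝ) (ζ : ℂ) (hc : c ≠ ζ.re) (s : ℝ) :
    ((c : ℂ) + (s : ℂ) * Complex.I) - ζ ≠ 0 := by
  intro h
  have := congrArg Complex.re h
  simp at this
  exact hc (by linarith)

lemma aux_integrable (c : ℝ) (m : ℕ) (hm : 3 ≤ m) (Δ : ℂ → ℂ) (ζ : ℂ) (hc : c ≠ ζ.re)
    (hcont : Continuous (fun s : ℝ => Δ ((c : ℂ) + (s : ℂ) * Complex.I))) (M : ℝ)
    (hM : ∀ s : ℝ, ‖Δ ((c : ℂ) + (s : ℂ) * Complex.I)‖ * ‖((c : ℂ) + (s : ℂ) * Complex.I)‖ ^ m ≤ M) :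
    Integrable (fun s : ℝ => Δ ((c : ℂ) + (s : ℂ) * Complex.I) /
        (((c : ℂ) + (s : ℂ) * Complex.I) - ζ)) := by
  obtain ⟨C, hC⟩ := (isCompact_Icc (a := (-1 : ℝ)) (b := 1)).exists_bound_of_continuousOn
    hcont.continuousOn
  have hd : 0 < |c - ζ.re| := abs_pos.mpr (sub_ne_zero.mpr hc)
  have hcont2 : Continuous (fun s : ℝ => Δ ((c : ℂ) + (s : ℂ) * Complex.I) /
        (((c : ℂ) + (s : ℂ) * Complex.I) - ζ)) :=
    hcont.div (by fun_prop) (aux_line_ne c ζ hc)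
  have hC0 : 0 ≤ C := (norm_nonneg _).trans (hC 0 (by simp))
  have hM0 : 0 ≤ M := le_trans (by positivity) (hM 0)
  refine Integrable.mono' ((integrable_inv_one_add_sq).const_mul (2 * (C + M) / |c - ζ.re|))
    hcont2.aestronglyMeasurable (Eventually.of_forall fun s => ?_)
  have h1 : |c - ζ.re| ≤ ‖((c : ℂ) + (s : ℂ) * Complex.I) - ζ‖ := by
    simpa using Complex.abs_re_le_norm (((c : ℂ) + (s : ℂ) * Complex.I) - ζ)
  have h2 : ‖Δ ((c : ℂ) + (s : ℂ) * Complex.I)‖ * (1 + s ^ 2) ≤ 2 * (C + M) := by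
    by_cases hs : |s| ≤ 1
    · have hb := hC s (by rw [abs_le] at hs; exact hs)
      have : s ^ 2 ≤ 1 := by rw [← sq_abs]; exact pow_le_one₀ (abs_nonneg _) hs
      nlinarith [norm_nonneg (Δ ((c : ℂ) + (s : ℂ) * Complex.I))]
    · push Not at hs
      have h3 : |s| ≤ ‖((c : ℂ) + (s : ℂ) * Complex.I)‖ := by
        simpa using Complex.abs_im_le_norm ((c : ℂ) + (s : ℂ) * Complex.I)
      have h4 : s ^ 2 ≤ ‖((c : ℂ) + (s : ℂ) * Complex.I)‖ ^ m := by
        rw [← sq_abs]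
        calc |s| ^ 2 ≤ |s| ^ m := pow_le_pow_right₀ hs.le (by omega)
          _ ≤ _ := by gcongr
      have h5 : 1 ≤ s ^ 2 := by rw [← sq_abs]; exact one_le_pow₀ hs.le
      have h6 := hM s
      have h7 := mul_le_mul_of_nonneg_left h4 (norm_nonneg (Δ ((c : ℂ) + (s : ℂ) * Complex.I)))
      have h8 := mul_le_mul_of_nonneg_left h5 (norm_nonneg (Δ ((c : ℂ) + (s : ℂ) * Complex.I)))
      nlinarith
  rw [norm_div]
  calc _ ≤ ‖Δ ((c : ℂ) + (s : ℂ) * Complex.I)‖ / |c - ζ.re| := by gcongr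
    _ ≤ (2 * (C + M) * (1 + s ^ 2)⁻¹) / |c - ζ.re| := by
        gcongr
        rw [← div_eq_mul_inv, le_div_iff₀ (by positivity)]
        exact h2
    _ = _ := by ring

lemma aux_arctan (b : ℝ) (hb : b ≠ 0) (T : ℝ) :
    ∫ u in (-T)..T, (1 : ℂ) / ((b : ℂ) + (u : ℂ) * Complex.I) = ((2 * Real.arctan (T / b) : ℝ) : ℂ) := by
  have hne : ∀ u : ℝ, (b : ℂ) + (u : ℂ) * Complex.I ≠ 0 := by
    intro u h
    have := congrArg Complex.re h
    simp at this
    exact hb this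
  have hpos : ∀ u : ℝ, 0 < b ^ 2 + u ^ 2 := fun u => by positivity
  have hder : ∀ u : ℝ, HasDerivAt (fun u : ℝ => ((Real.arctan (u / b) : ℝ) : ℂ) -
      Complex.I * ((Real.log (b ^ 2 + u ^ 2) / 2 : ℝ) : ℂ))
      ((1 : ℂ) / ((b : ℂ) + (u : ℂ) * Complex.I)) u := by
    intro u
    have h1 : HasDerivAt (fun u : ℝ => Real.arctan (u / b)) (1 / (1 + (u / b) ^ 2) * (1 / b)) u :=
      ((hasDerivAt_id u).div_const b).arctan
    have h2 : HasDerivAt (fun u : ℝ => Real.log (b ^ 2 + u ^ 2) / 2)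
        ((2 * u) / (b ^ 2 + u ^ 2) / 2) u := by
      have : HasDerivAt (fun u : ℝ => b ^ 2 + u ^ 2) (2 * u) u := by
        simpa using (hasDerivAt_pow 2 u).const_add (b ^ 2)
      exact (this.log (hpos u).ne').div_const 2
    refine (h1.ofReal_comp.sub (h2.ofReal_comp.const_mul Complex.I)).congr_deriv ?_
    symm
    have e1 : 1 / (1 + (u / b) ^ 2) * (1 / b) = b / (b ^ 2 + u ^ 2) := by
      have := (hpos u).ne'
      have : 1 + (u / b) ^ 2 ≠ 0 := by positivity
      field_simp
    have e2 : (2 * u) / (b ^ 2 + u ^ 2) / 2 = u / (b ^ 2 + u ^ 2) := by ring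
    rw [e1, e2]
    have e3 : (b : ℂ) ^ 2 + (u : ℂ) ^ 2 ≠ 0 := by exact_mod_cast (hpos u).ne'
    have := hne u
    push_cast
    field_simp
    ring_nf
    simp only [Complex.I_sq]
    ring
  rw [intervalIntegral.integral_eq_sub_of_hasDerivAt (fun u _ => hder u)]
  · rw [neg_div, Real.arctan_neg, neg_sq]
    push_cast
    ring
  · apply Continuous.intervalIntegrable
    exact continuous_const.div (by fun_prop) hne

theorem aux_main (A B : ℝ) (hAB : A < B) (m : ℕ) (hm : 3 ≤ m)
    (Δ : ℂ → ℂ)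
    (hcont : ContinuousOn Δ {ζ : ℂ | A ≤ ζ.re ∧ ζ.re ≤ B})
    (hdiff : DifferentiableOn ℂ Δ (interior {ζ : ℂ | A ≤ ζ.re ∧ ζ.re ≤ B}))
    (M : ℝ) (hM : ∀ ζ : ℂ, A ≤ ζ.re → ζ.re ≤ B →
      ‖Δ ζ‖ * ‖ζ‖ ^ m ≤ M) (ζ : ℂ) (hA : A < ζ.re) (hB : ζ.re < B)  :
      Integrable (fun s : ℝ => Δ ((B : ℂ) + (s : ℂ) * Complex.I) /
        (((B : ℂ) + (s : ℂ) * Complex.I) - ζ)) ∧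
      Integrable (fun s : ℝ => Δ ((A : ℂ) + (s : ℂ) * Complex.I) /
        (((A : ℂ) + (s : ℂ) * Complex.I) - ζ)) ∧
      Δ ζ = (1 / (2 * (Real.pi : ℂ))) *
          (∫ s : ℝ, Δ ((B : ℂ) + (s : ℂ) * Complex.I) /
            (((B : ℂ) + (s : ℂ) * Complex.I) - ζ)) -
        (1 / (2 * (Real.pi : ℂ))) *
          (∫ s : ℝ, Δ ((A : ℂ) + (s : ℂ) * Complex.I) /
            (((A : ℂ) + (s : ℂ) * Complex.I) - ζ)) := by
  have hline : ∀ c : ℝ, A ≤ c → c ≤ B →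
      Continuous (fun s : ℝ => Δ ((c : ℂ) + (s : ℂ) * Complex.I)) := by
    intro c h1 h2
    refine hcont.comp_continuous (by fun_prop) ?_
    intro s
    simp [h1, h2]
  have hIB := aux_integrable B m hm Δ ζ hB.ne' (hline B hAB.le le_rfl) M
    (fun s => hM _ (by simp [hAB.le]) (by simp))
  have hIA := aux_integrable A m hm Δ ζ hA.ne (hline A le_rfl hAB.le) M
    (fun s => hM _ (by simp) (by simp [hAB.le]))
  refine ⟨hIB, hIA, ?_⟩
  have hM0 : 0 ≤ M := le_trans (by positivity) (hM ζ hA.le hB.le)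
  have hopen : IsOpen {z : ℂ | A < z.re ∧ z.re < B} :=
    (isOpen_lt continuous_const Complex.continuous_re).inter
      (isOpen_lt Complex.continuous_re continuous_const)
  have hsub : {z : ℂ | A < z.re ∧ z.re < B} ⊆ interior {ζ : ℂ | A ≤ ζ.re ∧ ζ.re ≤ B} :=
    interior_maximal (fun z hz => ⟨hz.1.le, hz.2.le⟩) hopen
  have hdAt : ∀ z : ℂ, A < z.re → z.re < B → DifferentiableAt ℂ Δ z := fun z h1 h2 =>
    (hdiff z (hsub ⟨h1, h2⟩)).differentiableAt (isOpen_interior.mem_nhds (hsub ⟨h1, h2⟩))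
  set g : ℂ → ℂ := dslope Δ ζ with hg
  have hnh : {ζ : ℂ | A ≤ ζ.re ∧ ζ.re ≤ B} ∈ 𝓝 ζ :=
    mem_of_superset
      (hopen.mem_nhds (show ζ ∈ {z : ℂ | A < z.re ∧ z.re < B} from ⟨hA, hB⟩))
      (fun z (hz : A < z.re ∧ z.re < B) => ⟨hz.1.le, hz.2.le⟩)
  have hgcont : ContinuousOn g {ζ : ℂ | A ≤ ζ.re ∧ ζ.re ≤ B} :=
    (continuousOn_dslope hnh).2 ⟨hcont, hdAt ζ hA hB⟩
  have hgdiff : ∀ z : ℂ, A < z.re → z.re < B → z ≠ ζ → DifferentiableAt ℂ g z :=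
    fun z h1 h2 h3 => (differentiableAt_dslope_of_ne h3).2 (hdAt z h1 h2)
  have hgval : ∀ z : ℂ, z ≠ ζ → g z = (Δ z - Δ ζ) / (z - ζ) := by
    intro z hz
    rw [hg, dslope_of_ne _ hz, slope_def_field]
  -- vertical lines
  have hvert : ∀ c : ℝ, A ≤ c → c ≤ B → c ≠ ζ.re → ∀ T : ℝ,
      ∫ s in (ζ.im - T)..(ζ.im + T), g ((c : ℂ) + (s : ℂ) * Complex.I) =
      (∫ s in (ζ.im - T)..(ζ.im + T), Δ ((c : ℂ) + (s : ℂ) * Complex.I) /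
            (((c : ℂ) + (s : ℂ) * Complex.I) - ζ)) -
        Δ ζ * ((2 * Real.arctan (T / (c - ζ.re)) : ℝ) : ℂ) := by
    intro c h1 h2 h3 T
    have hne := aux_line_ne c ζ h3
    rw [← aux_arctan (c - ζ.re) (sub_ne_zero.mpr h3) T]
    have e : ∫ u in (-T)..T, (1 : ℂ) / (((c - ζ.re : ℝ) : ℂ) + (u : ℂ) * Complex.I) =
        ∫ s in (ζ.im - T)..(ζ.im + T), (1 : ℂ) / (((c : ℂ) + (s : ℂ) * Complex.I) - ζ) := by
      have := intervalIntegral.integral_comp_add_left (a := -T) (b := T)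
        (fun s : ℝ => (1 : ℂ) / (((c : ℂ) + (s : ℂ) * Complex.I) - ζ)) ζ.im
      rw [← sub_eq_add_neg] at this
      rw [← this]
      congr 1
      ext u
      congr 1
      apply Complex.ext <;> simp
    rw [e, ← intervalIntegral.integral_const_mul, ← intervalIntegral.integral_sub]
    · congr 1
      ext s
      rw [hgval _ (sub_ne_zero.mp (hne s))]
      ring
    · exact ((hline c h1 h2).div (by fun_prop) hne).intervalIntegrable _ _
    · exact (continuous_const.mul (continuous_const.div (by fun_prop) hne)).intervalIntegrable _ _
  -- rectangle
  have hrect : ∀ T : ℝ, 0 < T →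
      (∫ x in A..B, g ((x : ℂ) + ((ζ.im - T : ℝ) : ℂ) * Complex.I)) -
      (∫ x in A..B, g ((x : ℂ) + ((ζ.im + T : ℝ) : ℂ) * Complex.I)) +
      Complex.I * (∫ s in (ζ.im - T)..(ζ.im + T), g ((B : ℂ) + (s : ℂ) * Complex.I)) -
      Complex.I * (∫ s in (ζ.im - T)..(ζ.im + T), g ((A : ℂ) + (s : ℂ) * Complex.I)) = 0 := by
    intro T hT
    have := Complex.integral_boundary_rect_eq_zero_of_differentiable_on_off_countable g
      ⟨A, ζ.im - T⟩ ⟨B, ζ.im + T⟩ {ζ} (countable_singleton _)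
      (hgcont.mono (fun z hz => by
        have := hz.1
        simp only [uIcc_of_le hAB.le, mem_preimage, mem_Icc] at this
        exact this))
      (fun z hz => by
        have h1 := hz.1.1
        simp only [min_eq_left hAB.le, max_eq_right hAB.le, mem_preimage, mem_Ioo] at h1
        exact hgdiff z h1.1 h1.2 hz.2)
    simpa only [smul_eq_mul] using this
  -- horizontal bound
  have hbd : ∀ σ : ℝ, |σ| = 1 → ∀ T : ℝ, |ζ.im| + 1 ≤ T → 
      ‖∫ x in A..B, g ((x : ℂ) + ((ζ.im + σ * T : ℝ) : ℂ) * Complex.I)‖ ≤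
        (M + ‖Δ ζ‖) / T * |B - A| := by
    intro σ hσ T hT
    have hT0 : 0 < T := by linarith [abs_nonneg ζ.im]
    apply intervalIntegral.norm_integral_le_of_norm_le_const
    intro x hx
    rw [uIoc_of_le hAB.le] at hx
    set z : ℂ := (x : ℂ) + ((ζ.im + σ * T : ℝ) : ℂ) * Complex.I with hz
    have hzre : z.re = x := by simp [hz]
    have hzim : z.im = ζ.im + σ * T := by simp [hz]
    have hσT : |σ * T| = T := by rw [abs_mul, hσ, one_mul, abs_of_pos hT0]
    have h1 : T ≤ ‖z - ζ‖ := by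
      have := Complex.abs_im_le_norm (z - ζ)
      rw [Complex.sub_im, hzim, add_sub_cancel_left, hσT] at this
      exact this
    have hzne : z ≠ ζ := by
      rintro h
      rw [h] at h1
      simp at h1
      linarith
    have h2 : 1 ≤ ‖z‖ := by
      have h := Complex.abs_im_le_norm z
      rw [hzim] at h
      have h' := abs_sub_abs_le_abs_sub (σ * T) (-ζ.im)
      rw [hσT, abs_neg, sub_neg_eq_add, add_comm (σ * T)] at h'
      linarith
    have h3 : ‖Δ z‖ ≤ M :=
      (le_mul_of_one_le_right (norm_nonneg _) (one_le_pow₀ h2)).trans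
        (hM z (by rw [hzre]; exact hx.1.le) (by rw [hzre]; exact hx.2))
    rw [hgval z hzne, norm_div]
    gcongr
    exact (norm_sub_le _ _).trans (by linarith)
  have hlim0 : Tendsto (fun T : ℝ => (M + ‖Δ ζ‖) / T * |B - A|) atTop (𝓝 0) := by
    simpa using (tendsto_const_nhds.div_atTop tendsto_id).mul_const |B - A|
  have hhor : ∀ σ : ℝ, |σ| = 1 → Tendsto (fun T : ℝ =>
      ∫ x in A..B, g ((x : ℂ) + ((ζ.im + σ * T : ℝ) : ℂ) * Complex.I)) atTop (𝓝 0) := by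
    intro σ hσ
    refine squeeze_zero_norm' ?_ hlim0
    filter_upwards [eventually_ge_atTop (|ζ.im| + 1)] with T hT using hbd σ hσ T hT
  have hH1 := hhor (-1) (by simp)
  have hH2 := hhor 1 (by simp)
  have hlo : Tendsto (fun T : ℝ => ζ.im - T) atTop atBot :=
    tendsto_atBot_add_const_left _ _ tendsto_neg_atTop_atBot
  have hhi : Tendsto (fun T : ℝ => ζ.im + T) atTop atTop :=
    tendsto_atTop_add_const_left _ _ tendsto_id
  have hVB := intervalIntegral_tendsto_integral hIB hlo hhi
  have hVA := intervalIntegral_tendsto_integral hIA hlo hhi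
  have hatB : Tendsto (fun T : ℝ => ((2 * Real.arctan (T / (B - ζ.re)) : ℝ) : ℂ)) atTop
      (𝓝 (Real.pi : ℂ)) := by
    have h := (Real.tendsto_arctan_atTop.mono_right nhdsWithin_le_nhds).comp
      (tendsto_id.atTop_div_const (sub_pos.mpr hB))
    have h' := (Complex.continuous_ofReal.tendsto _).comp (h.const_mul 2)
    rw [show (2 * (Real.pi / 2) : ℝ) = Real.pi by ring] at h'
    exact h'
  have hatA : Tendsto (fun T : ℝ => ((2 * Real.arctan (T / (A - ζ.re)) : ℝ) : ℂ)) atTop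
      (𝓝 (-(Real.pi : ℂ))) := by
    have h := (Real.tendsto_arctan_atBot.mono_right nhdsWithin_le_nhds).comp
      (tendsto_id.atTop_div_const_of_neg (sub_neg.mpr hA))
    have h' := (Complex.continuous_ofReal.tendsto _).comp (h.const_mul 2)
    rw [show (2 * (-(Real.pi / 2)) : ℝ) = -Real.pi by ring, Complex.ofReal_neg] at h'
    exact h'
  have hL := ((hH1.sub hH2).add ((hVB.sub (hatB.const_mul (Δ ζ))).const_mul Complex.I)).sub
    ((hVA.sub (hatA.const_mul (Δ ζ))).const_mul Complex.I)
  have hzero := tendsto_nhds_unique (hL.congr' (f₂ := fun _ => (0 : ℂ)) (by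
    filter_upwards [eventually_gt_atTop 0] with T hT
    rw [← hvert B hAB.le le_rfl hB.ne' T, ← hvert A le_rfl hAB.le hA.ne T]
    simpa [← sub_eq_add_neg] using hrect T hT)) tendsto_const_nhds
  set P := ∫ s : ℝ, Δ ((B : ℂ) + (s : ℂ) * Complex.I) / (((B : ℂ) + (s : ℂ) * Complex.I) - ζ)
  set Q := ∫ s : ℝ, Δ ((A : ℂ) + (s : ℂ) * Complex.I) / (((A : ℂ) + (s : ℂ) * Complex.I) - ζ)
  have hpi : (Real.pi : ℂ) ≠ 0 := by exact_mod_cast Real.pi_ne_zero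
  have hfin : P - Q = 2 * Real.pi * Δ ζ := by
    apply mul_left_cancel₀ Complex.I_ne_zero
    linear_combination hzero
  rw [← mul_sub, hfin]
  field_simp

end

/-- Cauchy splitting on a strip. If `Δ` is holomorphic on the closed strip
`{A ≤ Re ζ ≤ B}` with `sup |Δ(ζ)|·|ζ|^m < ∞` for some `m ≥ 3`, then for `A < Re ζ < B`,
`Δ(ζ) = (1/2π)∫_ℝ Δ(B+is)/((B+is)−ζ) ds − (1/2π)∫_ℝ Δ(A+is)/((A+is)−ζ) ds`,
both integrals being absolutely convergent. -/
theorem statement9 (A B : ℝ) (hAB : A < B) (m : ℕ) (hm : 3 ≤ m)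
    (Δ : ℂ → ℂ)
    (hcont : ContinuousOn Δ {ζ : ℂ | A ≤ ζ.re ∧ ζ.re ≤ B})
    (hdiff : DifferentiableOn ℂ Δ (interior {ζ : ℂ | A ≤ ζ.re ∧ ζ.re ≤ B}))
    (hnorm : ∃ M : ℝ, ∀ ζ : ℂ, A ≤ ζ.re → ζ.re ≤ B →
      ‖Δ ζ‖ * ‖ζ‖ ^ m ≤ M) :
    ∀ ζ : ℂ, A < ζ.re → ζ.re < B →
      Integrable (fun s : ℝ => Δ ((B : ℂ) + (s : ℂ) * Complex.I) /
        (((B : ℂ) + (s : ℂ) * Complex.I) - ζ)) ∧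
      Integrable (fun s : ℝ => Δ ((A : ℂ) + (s : ℂ) * Complex.I) /
        (((A : ℂ) + (s : ℂ) * Complex.I) - ζ)) ∧
      Δ ζ = (1 / (2 * (Real.pi : ℂ))) *
          (∫ s : ℝ, Δ ((B : ℂ) + (s : ℂ) * Complex.I) /
            (((B : ℂ) + (s : ℂ) * Complex.I) - ζ)) -
        (1 / (2 * (Real.pi : ℂ))) *
          (∫ s : ℝ, Δ ((A : ℂ) + (s : ℂ) * Complex.I) /
            (((A : ℂ) + (s : ℂ) * Complex.I) - ζ)) := by
  obtain ⟨M, hM⟩ := hnorm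
  intro ζ hA hB
  exact aux_main A B hAB m hm Δ hcont hdiff M hM ζ hA hB
end
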